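/- Margin preservation by feature selection: in the SVM dual setup, let ε ∈ (0,1), let X ∈ ℝ^{p×d} have rank ρ and compact singular value decomposition X = UΣV^T, let R ∈ ℝ^{d×r} be a matrix with ‖I_ρ − V^T R R^T V‖₂ ≤ ε/2. Suppose α* ∈ K maximizes f over K, α̃* ∈ K maximizes f̃ over K, and the dual optimality identities Σ_i α*_i = ‖X^T Y α*‖₂² and Σ_i α̃*_i = ‖R^T X^T Y α̃*‖₂² hold. Set w* = X^T Y α* and w̃* = R^T X^T Y α̃*. Then (1 − ε)·‖w̃*‖₂² ≤ ‖w*‖₂²; in particular, if w* ≠ 0 and w̃* ≠ 0, the margins γ* = 1/‖w*‖₂ and γ̃* = 1/‖w̃*‖₂ satisfy (γ̃*)² ≥ (1 − ε)·(γ*)². -/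

import Mathlib

open Matrix

/-- Euclidean norm of a vector in ℝ^n. -/
noncomputable def euclNorm {n : ℕ} (x : Fin n → ℝ) : ℝ := Real.sqrt (∑ i, x i ^ 2)

/-- Spectral norm (ℓ₂ operator norm) of a real matrix: the supremum of `‖A x‖₂`
over unit vectors `x`. -/
noncomputable def specNorm {m n : ℕ} (A : Matrix (Fin m) (Fin n) ℝ) : ℝ :=
  sSup {c : ℝ | ∃ x : Fin n → ℝ, euclNorm x = 1 ∧ c = euclNorm (A.mulVec x)}

/-- The SVM dual feasible set `K = {α : 0 ≤ αᵢ ≤ C, Σᵢ yᵢαᵢ = 0}`. -/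
def svmFeasible {p : ℕ} (y : Fin p → ℝ) (C : ℝ) (α : Fin p → ℝ) : Prop :=
  (∀ i, 0 ≤ α i ∧ α i ≤ C) ∧ ∑ i, y i * α i = 0

/-- The SVM dual objective `f(α) = Σᵢ αᵢ − (1/2)‖XᵀYα‖₂²`, where `Y = diag(y)`. -/
noncomputable def svmDualObj {p d : ℕ} (X : Matrix (Fin p) (Fin d) ℝ) (y : Fin p → ℝ)
    (α : Fin p → ℝ) : ℝ :=
  ∑ i, α i - (1 / 2) * euclNorm (Xᵀ.mulVec ((Matrix.diagonal y).mulVec α)) ^ 2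

/-- The reduced SVM dual objective `f̃(α) = Σᵢ αᵢ − (1/2)‖RᵀXᵀYα‖₂²`. -/
noncomputable def svmDualObjRed {p d r : ℕ} (X : Matrix (Fin p) (Fin d) ℝ)
    (R : Matrix (Fin d) (Fin r) ℝ) (y : Fin p → ℝ) (α : Fin p → ℝ) : ℝ :=
  ∑ i, α i - (1 / 2) * euclNorm (Rᵀ.mulVec (Xᵀ.mulVec ((Matrix.diagonal y).mulVec α))) ^ 2

/-!
Write `w = XᵀYα` for the weight vector of `α`. Every `w` is a combination `V z` of the orthonormal
columns of `V`, so `‖w‖² - ‖Rᵀw‖² = zᵀ(1 - VᵀRRᵀV)z` is at most `(ε/2)‖w‖²`. Now let `w` be the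
weight vector of `α̃*`, so that `w̃* = Rᵀw`. The optimality identities turn `f(α̃*) ≤ f(α*)` into
`2‖w̃*‖² - ‖w‖² ≤ ‖w*‖²`, whose left-hand side is at least `‖w̃*‖² - (ε/2)‖w‖²`; moreover
`‖w‖² ≤ 2‖w̃*‖²` as soon as `ε ≤ 1`.
-/

theorem one_sub_mul_le_of_sub_le_mul {𝕜 : Type*} [Field 𝕜] [LinearOrder 𝕜]
    [IsStrictOrderedRing 𝕜] {ε q t w : 𝕜} (hε : 0 ≤ ε) (ht : 0 ≤ t) (hw : 0 ≤ w)
    (hqt : q - t ≤ ε / 2 * q) (hqw : 2 * t - q ≤ w) : (1 - ε) * t ≤ w := by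
  rcases le_total 1 ε with hε1 | hε1
  · exact (mul_nonpos_of_nonpos_of_nonneg (sub_nonpos.2 hε1) ht).trans hw
  · have hq : q ≤ 2 * t := by nlinarith
    calc (1 - ε) * t = t - ε / 2 * (2 * t) := by ring
      _ ≤ t - ε / 2 * q := by gcongr
      _ ≤ 2 * t - q := by linarith
      _ ≤ w := hqw

section EuclideanNorm

variable {m n : ℕ}

theorem euclNorm_eq_norm_toLp (x : Fin n → ℝ) : euclNorm x = ‖WithLp.toLp 2 x‖ := by
  simp only [euclNorm, EuclideanSpace.norm_eq, Real.norm_eq_abs, sq_abs]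

theorem euclNorm_pos {x : Fin n → ℝ} (hx : x ≠ 0) : 0 < euclNorm x := by
  rw [euclNorm_eq_norm_toLp]
  exact norm_pos_iff.2 ((WithLp.toLp_eq_zero 2).not.2 hx)

theorem euclNorm_sq_eq_dotProduct (x : Fin n → ℝ) : euclNorm x ^ 2 = x ⬝ᵥ x := by
  rw [euclNorm_eq_norm_toLp, ← real_inner_self_eq_norm_sq, EuclideanSpace.inner_toLp_toLp,
    star_trivial]

theorem abs_dotProduct_le_euclNorm_mul_euclNorm (x y : Fin n → ℝ) :
    |x ⬝ᵥ y| ≤ euclNorm x * euclNorm y := by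
  simpa only [euclNorm_eq_norm_toLp, EuclideanSpace.inner_toLp_toLp, star_trivial,
    dotProduct_comm y x] using abs_real_inner_le_norm (WithLp.toLp 2 x) (WithLp.toLp 2 y)

theorem euclNorm_mulVec_sq (A : Matrix (Fin m) (Fin n) ℝ) (x : Fin n → ℝ) :
    euclNorm (A *ᵥ x) ^ 2 = x ⬝ᵥ (Aᵀ * A) *ᵥ x := by
  rw [euclNorm_sq_eq_dotProduct, dotProduct_mulVec, vecMul_mulVec, ← dotProduct_mulVec]

theorem euclNorm_mulVec_sq_of_transpose_mul_self_eq_one {V : Matrix (Fin m) (Fin n) ℝ}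
    (hV : Vᵀ * V = 1) (z : Fin n → ℝ) : euclNorm (V *ᵥ z) ^ 2 = euclNorm z ^ 2 := by
  rw [euclNorm_mulVec_sq, hV, one_mulVec, euclNorm_sq_eq_dotProduct]

end EuclideanNorm

section SpectralNorm

open scoped Matrix.Norms.L2Operator

variable {k m n : ℕ}

theorem specNorm_eq_l2_opNorm (A : Matrix (Fin m) (Fin n) ℝ) : specNorm A = ‖A‖ := by
  rw [l2_opNorm_def, ← ContinuousLinearMap.sSup_sphere_eq_norm, specNorm]
  congr 1
  ext c
  constructor
  · rintro ⟨x, hx, rfl⟩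
    rw [euclNorm_eq_norm_toLp] at hx
    exact ⟨WithLp.toLp 2 x, mem_sphere_zero_iff_norm.2 hx, (euclNorm_eq_norm_toLp _).symm⟩
  · rintro ⟨x, hx, rfl⟩
    exact ⟨x.ofLp, (euclNorm_eq_norm_toLp _).trans (mem_sphere_zero_iff_norm.1 hx),
      (euclNorm_eq_norm_toLp _).symm⟩

theorem specNorm_nonneg (A : Matrix (Fin m) (Fin n) ℝ) : 0 ≤ specNorm A := by
  rw [specNorm_eq_l2_opNorm]
  exact norm_nonneg A

theorem euclNorm_mulVec_le (A : Matrix (Fin m) (Fin n) ℝ) (x : Fin n → ℝ) :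
    euclNorm (A *ᵥ x) ≤ specNorm A * euclNorm x := by
  simpa only [euclNorm_eq_norm_toLp, specNorm_eq_l2_opNorm] using!
    l2_opNorm_mulVec A (WithLp.toLp 2 x)

theorem abs_dotProduct_mulVec_le (A : Matrix (Fin n) (Fin n) ℝ) (x : Fin n → ℝ) :
    |x ⬝ᵥ A *ᵥ x| ≤ specNorm A * euclNorm x ^ 2 :=
  calc |x ⬝ᵥ A *ᵥ x| ≤ euclNorm x * euclNorm (A *ᵥ x) :=
        abs_dotProduct_le_euclNorm_mul_euclNorm x (A *ᵥ x)
    _ ≤ euclNorm x * (specNorm A * euclNorm x) :=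
        mul_le_mul_of_nonneg_left (euclNorm_mulVec_le A x) (Real.sqrt_nonneg _)
    _ = specNorm A * euclNorm x ^ 2 := by ring

theorem abs_euclNorm_mulVec_sq_sub_le (A : Matrix (Fin m) (Fin n) ℝ)
    (B : Matrix (Fin k) (Fin n) ℝ) (x : Fin n → ℝ) :
    |euclNorm (A *ᵥ x) ^ 2 - euclNorm (B *ᵥ x) ^ 2| ≤
      specNorm (Aᵀ * A - Bᵀ * B) * euclNorm x ^ 2 := by
  rw [euclNorm_mulVec_sq, euclNorm_mulVec_sq, ← dotProduct_sub, ← sub_mulVec]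
  exact abs_dotProduct_mulVec_le (Aᵀ * A - Bᵀ * B) x

theorem abs_euclNorm_mulVec_sq_sub_sketch_le {V : Matrix (Fin m) (Fin n) ℝ} (hV : Vᵀ * V = 1)
    (R : Matrix (Fin m) (Fin k) ℝ) (z : Fin n → ℝ) :
    |euclNorm (V *ᵥ z) ^ 2 - euclNorm (Rᵀ *ᵥ V *ᵥ z) ^ 2| ≤
      specNorm (1 - Vᵀ * R * Rᵀ * V) * euclNorm (V *ᵥ z) ^ 2 := by
  have hgram : (Rᵀ * V)ᵀ * (Rᵀ * V) = Vᵀ * R * Rᵀ * V := by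
    rw [transpose_mul, transpose_transpose, ← Matrix.mul_assoc]
  have h := abs_euclNorm_mulVec_sq_sub_le V (Rᵀ * V) z
  rwa [hV, hgram, ← mulVec_mulVec, ← euclNorm_mulVec_sq_of_transpose_mul_self_eq_one hV] at h

end SpectralNorm

section SupportVectorMachine

variable {p d r ρ : ℕ} {X : Matrix (Fin p) (Fin d) ℝ} {V : Matrix (Fin d) (Fin ρ) ℝ}
  {B : Matrix (Fin p) (Fin ρ) ℝ}

/-- The primal weight vector `w = XᵀYα` that the dual variable `α` determines, where
`Y = diag(y)`. The margin is `1/‖w‖`, and the reduced problem has weight vector `Rᵀw`. -/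
def svmWeight (X : Matrix (Fin p) (Fin d) ℝ) (y α : Fin p → ℝ) : Fin d → ℝ :=
  Xᵀ *ᵥ diagonal y *ᵥ α

theorem two_mul_sum_sub_le_of_svmDualObj_le {y α β : Fin p → ℝ}
    (hle : svmDualObj X y β ≤ svmDualObj X y α)
    (hα : ∑ i, α i = euclNorm (svmWeight X y α) ^ 2) :
    2 * ∑ i, β i - euclNorm (svmWeight X y β) ^ 2 ≤ euclNorm (svmWeight X y α) ^ 2 := by
  change ∑ i, β i - 1 / 2 * euclNorm (svmWeight X y β) ^ 2 ≤
    ∑ i, α i - 1 / 2 * euclNorm (svmWeight X y α) ^ 2 at hle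
  linarith

theorem svmWeight_eq_mulVec (hX : X = B * Vᵀ) (y α : Fin p → ℝ) :
    svmWeight X y α = V *ᵥ Bᵀ *ᵥ diagonal y *ᵥ α := by
  rw [svmWeight, hX, transpose_mul, transpose_transpose, ← mulVec_mulVec]

theorem abs_euclNorm_svmWeight_sq_sub_sketch_le (hV : Vᵀ * V = 1) (hX : X = B * Vᵀ)
    (R : Matrix (Fin d) (Fin r) ℝ) (y α : Fin p → ℝ) :
    |euclNorm (svmWeight X y α) ^ 2 - euclNorm (Rᵀ *ᵥ svmWeight X y α) ^ 2| ≤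
      specNorm (1 - Vᵀ * R * Rᵀ * V) * euclNorm (svmWeight X y α) ^ 2 := by
  rw [svmWeight_eq_mulVec hX]
  exact abs_euclNorm_mulVec_sq_sub_sketch_le hV R _

theorem svm_margin_preservation_general {ε : ℝ} (hV : Vᵀ * V = 1) (hX : X = B * Vᵀ)
    {R : Matrix (Fin d) (Fin r) ℝ} (hE : specNorm (1 - Vᵀ * R * Rᵀ * V) ≤ ε / 2)
    {y αs αt : Fin p → ℝ} (hle : svmDualObj X y αt ≤ svmDualObj X y αs)
    (hαs : ∑ i, αs i = euclNorm (svmWeight X y αs) ^ 2)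
    (hαt : ∑ i, αt i = euclNorm (Rᵀ *ᵥ svmWeight X y αt) ^ 2) :
    (1 - ε) * euclNorm (Rᵀ *ᵥ svmWeight X y αt) ^ 2 ≤ euclNorm (svmWeight X y αs) ^ 2 ∧
    (svmWeight X y αs ≠ 0 → Rᵀ *ᵥ svmWeight X y αt ≠ 0 →
      (1 - ε) * (1 / euclNorm (svmWeight X y αs)) ^ 2 ≤
        (1 / euclNorm (Rᵀ *ᵥ svmWeight X y αt)) ^ 2) := by
  have hε : 0 ≤ ε := by linarith [specNorm_nonneg (1 - Vᵀ * R * Rᵀ * V)]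
  have hdual := two_mul_sum_sub_le_of_svmDualObj_le hle hαs
  rw [hαt] at hdual
  have hsketch : euclNorm (svmWeight X y αt) ^ 2 - euclNorm (Rᵀ *ᵥ svmWeight X y αt) ^ 2 ≤
      ε / 2 * euclNorm (svmWeight X y αt) ^ 2 :=
    (le_of_abs_le (abs_euclNorm_svmWeight_sq_sub_sketch_le hV hX R y αt)).trans
      (mul_le_mul_of_nonneg_right hE (sq_nonneg _))
  have hnorm := one_sub_mul_le_of_sub_le_mul hε (sq_nonneg _) (sq_nonneg _) hsketch hdual
  refine ⟨hnorm, fun hs ht => ?_⟩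
  rw [_root_.one_div_pow, _root_.one_div_pow, mul_one_div,
    div_le_div_iff₀ (pow_pos (euclNorm_pos hs) 2) (pow_pos (euclNorm_pos ht) 2), one_mul]
  exact hnorm

end SupportVectorMachine

/-- **Theorem 1 (margin preservation by feature selection).** If
`‖I_ρ − VᵀRRᵀV‖₂ ≤ ε/2`, `α*` maximizes `f` over `K`, `α̃*` maximizes `f̃` over `K`,
and the dual optimality identities hold, then with `w* = XᵀYα*` and
`w̃* = RᵀXᵀYα̃*` one has `(1 − ε)‖w̃*‖₂² ≤ ‖w*‖₂²`; in particular, if `w* ≠ 0`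
and `w̃* ≠ 0`, the margins `γ* = 1/‖w*‖₂` and `γ̃* = 1/‖w̃*‖₂` satisfy
`(γ̃*)² ≥ (1 − ε)(γ*)²`. -/
theorem svm_margin_preservation
    (p d r ρ : ℕ) (ε : ℝ) (hε : ε ∈ Set.Ioo (0 : ℝ) 1)
    (X : Matrix (Fin p) (Fin d) ℝ) (hrank : X.rank = ρ)
    (U : Matrix (Fin p) (Fin ρ) ℝ) (S : Matrix (Fin ρ) (Fin ρ) ℝ)
    (V : Matrix (Fin d) (Fin ρ) ℝ)
    (hU : Uᵀ * U = 1) (hV : Vᵀ * V = 1)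
    (hS : ∃ σ : Fin ρ → ℝ, (∀ i, 0 < σ i) ∧ S = Matrix.diagonal σ)
    (hX : X = U * S * Vᵀ)
    (R : Matrix (Fin d) (Fin r) ℝ)
    (hE : specNorm ((1 : Matrix (Fin ρ) (Fin ρ) ℝ) - Vᵀ * R * Rᵀ * V) ≤ ε / 2)
    (y : Fin p → ℝ) (hy : ∀ i, y i = 1 ∨ y i = -1)
    (C : ℝ) (hC : 0 < C)
    (αs : Fin p → ℝ) (hαs : svmFeasible y C αs)
    (hαsmax : ∀ β, svmFeasible y C β → svmDualObj X y β ≤ svmDualObj X y αs)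
    (hid1 : ∑ i, αs i = euclNorm (Xᵀ.mulVec ((Matrix.diagonal y).mulVec αs)) ^ 2)
    (αt : Fin p → ℝ) (hαt : svmFeasible y C αt)
    (hαtmax : ∀ β, svmFeasible y C β → svmDualObjRed X R y β ≤ svmDualObjRed X R y αt)
    (hid2 : ∑ i, αt i
      = euclNorm (Rᵀ.mulVec (Xᵀ.mulVec ((Matrix.diagonal y).mulVec αt))) ^ 2) :
    (1 - ε) * euclNorm (Rᵀ.mulVec (Xᵀ.mulVec ((Matrix.diagonal y).mulVec αt))) ^ 2
        ≤ euclNorm (Xᵀ.mulVec ((Matrix.diagonal y).mulVec αs)) ^ 2 ∧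
    (Xᵀ.mulVec ((Matrix.diagonal y).mulVec αs) ≠ 0 →
     Rᵀ.mulVec (Xᵀ.mulVec ((Matrix.diagonal y).mulVec αt)) ≠ 0 →
     (1 - ε) * (1 / euclNorm (Xᵀ.mulVec ((Matrix.diagonal y).mulVec αs))) ^ 2
       ≤ (1 / euclNorm (Rᵀ.mulVec (Xᵀ.mulVec ((Matrix.diagonal y).mulVec αt)))) ^ 2) :=
  svm_margin_preservation_general hV hX hE (hαsmax αt hαt) hid1 hid2
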